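/- (Foster's criterion) Let (X_n) be an irreducible Markov chain on a countable state space S, and suppose there is a function f : S → [0,∞) with finite sublevel sets {x : f(x) ≤ M} and a finite set F ⊆ S such that E[f(X_{n+1}) - f(X_n) | X_n = x] ≤ -ε < 0 for all x ∉ F (for some ε ≥ 0, with ε = 0 allowed provided the drift is strictly negative outside F and f(X_{n+1}) is integrable). Then the chain is recurrent. -/

import Mathlib

open MeasureTheory
open scoped Classical

/-- `nStepProb K n x y` is the `n`-step transition probability of a Markov chain with
one-step transition probabilities `K`. -/
noncomputable def nStepProb {S : Type*} (K : S → S → ℝ) : ℕ → S → S → ℝ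
  | 0, x, y => if x = y then 1 else 0
  | n + 1, x, y => ∑' z : S, K x z * nStepProb K n z y

/-!
Let `A` be a set of states accessible from everywhere, and let `h z` be the probability that the
chain started at `z` never visits `A`. Then `-h` is bounded, vanishes on `A` and is harmonic off
`A`. For `ε > 0` the function `ε f - h` tends to infinity, so it has a minimum; as it is
superharmonic off `A ∪ F`, the strong minimum principle moves this minimum into `A ∪ F`. Letting
`ε → 0`, the function `-h` is bounded below by its values on `A ∪ F`. If it were negative
somewhere, it would therefore have a negative minimum, attained on the finite set `F`, and the
strong minimum principle, now off `A` alone, would move that minimum into `A`, where `h = 0`.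
Hence `h = 0`. Applied at each time `N`, conditionally on the path up to `N`, this says that `A` is
almost surely visited at some time from `N` on.
-/

open Filter Set
open scoped Topology

/-- `K` is a stochastic matrix: its rows are probability distributions on `S`. -/
structure IsStochastic {S : Type*} (K : S → S → ℝ) : Prop where
  nonneg : ∀ x y, 0 ≤ K x y
  tsum_eq_one : ∀ x, ∑' y, K x y = 1

/-- Some state of `A` is accessible from `z`, possibly in zero steps. -/
def Reaches {S : Type*} (K : S → S → ℝ) (z : S) (A : Set S) : Prop :=
  ∃ a ∈ A, ∃ n, 0 < nStepProb K n z a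

/-- `u` is superharmonic at `z`: its mean under the transition law `K z` exists and is at most
`u z`. Summability is included because the `tsum` of a non-summable family is `0`. -/
def SuperharmonicAt {S : Type*} (K : S → S → ℝ) (u : S → ℝ) (z : S) : Prop :=
  Summable (fun y => K z y * u y) ∧ ∑' y, K z y * u y ≤ u z

/-- The probability that the chain started at a given state avoids `A` at the times `0, …, k - 1`,
by first-step analysis. -/
noncomputable def avoidProb {S : Type*} (K : S → S → ℝ) (A : Set S) : ℕ → S → ℝ
  | 0 => 1
  | k + 1 => Aᶜ.indicator fun z => ∑' w, K z w * avoidProb K A k w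

/-- The event that `X` follows `path` up to and including time `n`. -/
def pathEvent {S Ω : Type*} (X : ℕ → Ω → S) (n : ℕ) (path : ℕ → S) : Set Ω :=
  {ω | ∀ i ≤ n, X i ω = path i}

/-- `X` is a time-homogeneous Markov chain with transition matrix `K`. The Markov property is
written without conditional probabilities, so paths of probability zero need no convention. -/
def IsMarkovChain {S Ω : Type*} [MeasurableSpace Ω] (μ : Measure Ω) (X : ℕ → Ω → S)
    (K : S → S → ℝ) : Prop :=
  ∀ (n : ℕ) (path : ℕ → S) (y : S),
    μ (pathEvent X n path ∩ {ω | X (n + 1) ω = y}) =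
      μ (pathEvent X n path) * ENNReal.ofReal (K (path n) y)

section TransitionMatrix

variable {S : Type*} {K : S → S → ℝ} {A B : Set S} {z : S} {u v f : S → ℝ}

lemma nStepProb_nonneg (hK : ∀ x y, 0 ≤ K x y) (n : ℕ) (x y : S) : 0 ≤ nStepProb K n x y := by
  induction n generalizing x with
  | zero => unfold nStepProb; positivity
  | succ n ih => exact tsum_nonneg fun z => mul_nonneg (hK x z) (ih z)

lemma exists_pos_of_nStepProb_succ_pos (hK : ∀ x y, 0 ≤ K x y) {n : ℕ} {x y : S}
    (h : 0 < nStepProb K (n + 1) x y) : ∃ z, 0 < K x z ∧ 0 < nStepProb K n z y := by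
  obtain ⟨z, hz⟩ : ∃ z, K x z * nStepProb K n z y ≠ 0 := by
    by_contra! hzero
    simp [nStepProb, hzero] at h
  exact ⟨z, (hK x z).lt_of_ne' (left_ne_zero_of_mul hz),
    (nStepProb_nonneg hK n z y).lt_of_ne' (right_ne_zero_of_mul hz)⟩

lemma Reaches.mono (hAB : A ⊆ B) (h : Reaches K z A) : Reaches K z B :=
  let ⟨a, ha, hn⟩ := h
  ⟨a, hAB ha, hn⟩

lemma SuperharmonicAt.add (hu : SuperharmonicAt K u z) (hv : SuperharmonicAt K v z) :
    SuperharmonicAt K (u + v) z := by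
  simp only [SuperharmonicAt, Pi.add_apply, mul_add]
  exact ⟨hu.1.add hv.1, (hu.1.tsum_add hv.1).trans_le (add_le_add hu.2 hv.2)⟩

lemma SuperharmonicAt.const_smul {c : ℝ} (hc : 0 ≤ c) (hu : SuperharmonicAt K u z) :
    SuperharmonicAt K (c • u) z := by
  simp only [SuperharmonicAt, Pi.smul_apply, smul_eq_mul, mul_left_comm _ c]
  exact ⟨hu.1.mul_left c, tsum_mul_left.trans_le (mul_le_mul_of_nonneg_left hu.2 hc)⟩

namespace IsStochastic

lemma summable (hK : IsStochastic K) (x : S) : Summable (K x) := by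
  by_contra h
  simpa [tsum_eq_zero_of_not_summable h] using hK.tsum_eq_one x

lemma summable_mul (hK : IsStochastic K) (z : S) (hu : ∀ y, u y ∈ Icc 0 1) :
    Summable fun y => K z y * u y :=
  .of_nonneg_of_le (fun y => mul_nonneg (hK.nonneg z y) (hu y).1)
    (fun y => mul_le_of_le_one_right (hK.nonneg z y) (hu y).2) (hK.summable z)

lemma tsum_mul_mem_Icc (hK : IsStochastic K) (z : S) (hu : ∀ y, u y ∈ Icc 0 1) :
    ∑' y, K z y * u y ∈ Icc 0 1 := by
  refine ⟨tsum_nonneg fun y => mul_nonneg (hK.nonneg z y) (hu y).1, ?_⟩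
  rw [← hK.tsum_eq_one z]
  exact (hK.summable_mul z hu).tsum_le_tsum
    (fun y => mul_le_of_le_one_right (hK.nonneg z y) (hu y).2) (hK.summable z)

lemma tendsto_tsum_mul (hK : IsStochastic K) (z : S) {u : ℕ → S → ℝ} {v : S → ℝ}
    (hu : ∀ k y, u k y ∈ Icc 0 1) (huv : ∀ y, Tendsto (u · y) atTop (𝓝 (v y))) :
    Tendsto (fun k => ∑' y, K z y * u k y) atTop (𝓝 (∑' y, K z y * v y)) := by
  refine tendsto_tsum_of_dominated_convergence (hK.summable z) (fun y => (huv y).const_mul _)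
    (.of_forall fun k y => ?_)
  rw [Real.norm_of_nonneg (mul_nonneg (hK.nonneg z y) (hu k y).1)]
  exact mul_le_of_le_one_right (hK.nonneg z y) (hu k y).2

lemma eq_of_superharmonicAt_of_forall_le (hK : IsStochastic K) (hu : SuperharmonicAt K u z)
    (hmin : ∀ y, u z ≤ u y) {w : S} (hw : 0 < K z w) : u w = u z := by
  by_contra hne
  have hconst : ∑' y, K z y * u z = u z := by rw [tsum_mul_right, hK.tsum_eq_one, one_mul]
  have hlt : ∑' y, K z y * u z < ∑' y, K z y * u y :=
    Summable.tsum_lt_tsum (i := w) (fun y => mul_le_mul_of_nonneg_left (hmin y) (hK.nonneg z y))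
      (mul_lt_mul_of_pos_left ((hmin w).lt_of_ne' hne) hw) ((hK.summable z).mul_right _) hu.1
  exact (hlt.trans_le hu.2).ne hconst

theorem strong_minimum_principle (hK : IsStochastic K) (hu : ∀ y ∉ B, SuperharmonicAt K u y)
    (hmin : ∀ y, u z ≤ u y) (hz : Reaches K z B) : ∃ b ∈ B, u b = u z := by
  obtain ⟨b, hb, n, hn⟩ := hz
  induction n generalizing z with
  | zero =>
    obtain rfl : z = b := by
      by_contra hne
      simp [nStepProb, hne] at hn
    exact ⟨z, hb, rfl⟩
  | succ n ih =>
    by_cases hzB : z ∈ B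
    · exact ⟨z, hzB, rfl⟩
    obtain ⟨w, hzw, hwb⟩ := exists_pos_of_nStepProb_succ_pos hK.nonneg hn
    have hwz : u w = u z := hK.eq_of_superharmonicAt_of_forall_le (hu z hzB) hmin hzw
    simpa only [hwz] using ih (fun y => hwz.trans_le (hmin y)) hwb

lemma le_of_superharmonicAt_of_tendsto (hK : IsStochastic K) (hB : ∀ y, Reaches K y B)
    (hf : Tendsto f cofinite atTop) (hfB : ∀ y ∉ B, SuperharmonicAt K f y)
    (hu : BddBelow (range u)) (huB : ∀ y ∉ B, SuperharmonicAt K u y)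
    {c : ℝ} (hc : ∀ b ∈ B, c ≤ u b) (z : S) : c ≤ u z := by
  have : Nonempty S := ⟨z⟩
  obtain ⟨m, hm⟩ := hf.exists_forall_le
  obtain ⟨l, hl⟩ := hu
  have perturbed (ε : ℝ) (hε : 0 < ε) : c ≤ u z + ε * (f z - f m) := by
    obtain ⟨x, hx⟩ : ∃ x, ∀ y, (u + ε • f) x ≤ (u + ε • f) y :=
      (tendsto_atTop_add_left_of_le _ l (fun y => hl ⟨y, rfl⟩)
        (hf.const_mul_atTop hε)).exists_forall_le
    obtain ⟨b, hb, hbx⟩ := hK.strong_minimum_principle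
      (fun y hy => (huB y hy).add ((hfB y hy).const_smul hε.le)) hx (hB x)
    have hbz : u b + ε * f b ≤ u z + ε * f z := hbx.trans_le (hx z)
    linarith [hc b hb, mul_le_mul_of_nonneg_left (hm b) hε.le]
  have hlim : Tendsto (fun ε => u z + ε * (f z - f m)) (𝓝[>] 0) (𝓝 (u z)) :=
    tendsto_nhdsWithin_of_tendsto_nhds <| Continuous.tendsto' (by fun_prop) _ _ (by simp)
  exact ge_of_tendsto hlim (eventually_mem_nhdsWithin.mono perturbed)

theorem minimum_principle_of_tendsto (hK : IsStochastic K) (hA : ∀ y, Reaches K y A)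
    (hf : Tendsto f cofinite atTop) {F : Set S} (hF : F.Finite)
    (hfF : ∀ y ∉ F, SuperharmonicAt K f y) (hu : BddBelow (range u))
    (huA : ∀ y ∉ A, SuperharmonicAt K u y) {c : ℝ} (hc : ∀ a ∈ A, c ≤ u a) (z : S) :
    c ≤ u z := by
  by_contra! hz
  -- Adjoining `z` guarantees that the minimum over this finite set is below `c`.
  obtain ⟨m, -, hm⟩ := exists_min_image (insert z F) u (hF.insert z) ⟨z, mem_insert z F⟩
  have hmc : u m < c := (hm z (mem_insert z F)).trans_lt hz
  have hboundary : ∀ b ∈ A ∪ F, u m ≤ u b := fun b hb =>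
    hb.elim (fun hbA => hmc.le.trans (hc b hbA)) (fun hbF => hm b (mem_insert_of_mem z hbF))
  have hmin : ∀ y, u m ≤ u y :=
    hK.le_of_superharmonicAt_of_tendsto (fun y => (hA y).mono subset_union_left) hf
      (fun y hy => hfF y (notMem_subset subset_union_right hy)) hu
      (fun y hy => huA y (notMem_subset subset_union_left hy)) hboundary
  obtain ⟨a, ha, ham⟩ := hK.strong_minimum_principle huA hmin (hA m)
  exact (hc a ha).not_gt (ham.trans_lt hmc)

end IsStochastic

end TransitionMatrix

section AvoidProb

variable {S : Type*} {K : S → S → ℝ} {A : Set S}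

lemma avoidProb_succ_of_mem {z : S} (hz : z ∈ A) (k : ℕ) : avoidProb K A (k + 1) z = 0 :=
  indicator_of_notMem (notMem_compl_iff.2 hz) _

lemma avoidProb_succ_of_notMem {z : S} (hz : z ∉ A) (k : ℕ) :
    avoidProb K A (k + 1) z = ∑' w, K z w * avoidProb K A k w :=
  indicator_of_mem (mem_compl hz) _

lemma avoidProb_mem_Icc (hK : IsStochastic K) (A : Set S) (k : ℕ) (z : S) :
    avoidProb K A k z ∈ Icc 0 1 := by
  induction k generalizing z with
  | zero => simp [avoidProb]
  | succ k ih =>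
    by_cases hz : z ∈ A
    · simp [avoidProb_succ_of_mem hz]
    · simpa only [avoidProb_succ_of_notMem hz] using hK.tsum_mul_mem_Icc z ih

lemma antitone_avoidProb (hK : IsStochastic K) (A : Set S) (z : S) :
    Antitone fun k => avoidProb K A k z := by
  refine antitone_nat_of_succ_le fun k => ?_
  induction k generalizing z with
  | zero => exact (avoidProb_mem_Icc hK A 1 z).2
  | succ k ih =>
    by_cases hz : z ∈ A
    · simp [avoidProb_succ_of_mem hz]
    · simp only [avoidProb_succ_of_notMem hz]
      exact (hK.summable_mul z (avoidProb_mem_Icc hK A _)).tsum_le_tsum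
        (fun w => mul_le_mul_of_nonneg_left (ih w) (hK.nonneg z w))
        (hK.summable_mul z (avoidProb_mem_Icc hK A _))

theorem tendsto_avoidProb_zero (hK : IsStochastic K) (hA : ∀ y, Reaches K y A) {f : S → ℝ}
    (hf : Tendsto f cofinite atTop) {F : Set S} (hF : F.Finite)
    (hfF : ∀ y ∉ F, SuperharmonicAt K f y) (z : S) :
    Tendsto (fun k => avoidProb K A k z) atTop (𝓝 0) := by
  have hmem := avoidProb_mem_Icc hK A
  let h : S → ℝ := fun w => ⨅ k, avoidProb K A k w
  have hlim (w : S) : Tendsto (fun k => avoidProb K A k w) atTop (𝓝 (h w)) :=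
    tendsto_atTop_ciInf (antitone_avoidProb hK A w) ⟨0, forall_mem_range.2 fun k => (hmem k w).1⟩
  have hh (w : S) : h w ∈ Icc 0 1 := isClosed_Icc.mem_of_tendsto (hlim w) (.of_forall (hmem · w))
  have hzero (a : S) (ha : a ∈ A) : h a = 0 :=
    tendsto_nhds_unique ((hlim a).comp (tendsto_add_atTop_nat 1))
      (tendsto_const_nhds.congr fun k => (avoidProb_succ_of_mem ha k).symm)
  have hharmonic (w : S) (hw : w ∉ A) : ∑' y, K w y * h y = h w :=
    tendsto_nhds_unique ((hK.tendsto_tsum_mul w hmem hlim).congr fun k =>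
      (avoidProb_succ_of_notMem hw k).symm) ((hlim w).comp (tendsto_add_atTop_nat 1))
  have hsuper (w : S) (hw : w ∉ A) : SuperharmonicAt K (-h) w := by
    simp only [SuperharmonicAt, Pi.neg_apply, mul_neg, tsum_neg, hharmonic w hw]
    exact ⟨(hK.summable_mul w hh).neg, le_rfl⟩
  have hnonpos : 0 ≤ -h z :=
    hK.minimum_principle_of_tendsto hA hf hF hfF
      ⟨-1, forall_mem_range.2 fun w => neg_le_neg (hh w).2⟩ hsuper
      (fun a ha => by simp [hzero a ha]) z
  have hz : h z = 0 := le_antisymm (neg_nonneg.1 hnonpos) (hh z).1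
  exact hz ▸ hlim z

end AvoidProb

section MarkovChain

variable {S Ω : Type*} {X : ℕ → Ω → S}

lemma iUnion_pathEvent_IicExtend (X : ℕ → Ω → S) (n : ℕ) :
    ⋃ p : Iic n → S, pathEvent X n (IicExtend p) = univ :=
  eq_univ_of_forall fun ω =>
    mem_iUnion.2 ⟨fun i => X i ω, fun _ hi => (IicExtend_of_mem (fun i : Iic n => X i ω) hi).symm⟩

lemma pathEvent_succ_update (X : ℕ → Ω → S) (n : ℕ) (path : ℕ → S) (y : S) :
    pathEvent X (n + 1) (Function.update path (n + 1) y) =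
      pathEvent X n path ∩ {ω | X (n + 1) ω = y} := by
  have hupdate : ∀ i ≤ n, Function.update path (n + 1) y i = path i := fun i hi =>
    Function.update_of_ne (by lia) _ _
  ext ω
  simp +contextual [pathEvent, Nat.le_succ_iff, or_imp, forall_and, hupdate]

variable [MeasurableSpace Ω] {μ : Measure Ω} {K : S → S → ℝ} [Countable S]

lemma IsMarkovChain.measure_pathEvent_inter_le_tsum (hX : IsMarkovChain μ X K)
    (hK : ∀ x y, 0 ≤ K x y) {n : ℕ} {path : ℕ → S} {E : Set Ω} {u : S → ℝ} (hu : ∀ y, 0 ≤ u y)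
    (hsum : Summable fun y => K (path n) y * u y)
    (h : ∀ y, μ (pathEvent X (n + 1) (Function.update path (n + 1) y) ∩ E) ≤
      μ (pathEvent X (n + 1) (Function.update path (n + 1) y)) * ENNReal.ofReal (u y)) :
    μ (pathEvent X n path ∩ E) ≤
      μ (pathEvent X n path) * ENNReal.ofReal (∑' y, K (path n) y * u y) := by
  have hcover : pathEvent X n path ∩ E ⊆
      ⋃ y, pathEvent X (n + 1) (Function.update path (n + 1) y) ∩ E := fun ω hω =>
    mem_iUnion.2 ⟨X (n + 1) ω, by rw [pathEvent_succ_update]; exact ⟨hω.1, rfl⟩, hω.2⟩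
  calc μ (pathEvent X n path ∩ E)
      ≤ ∑' y, μ (pathEvent X (n + 1) (Function.update path (n + 1) y) ∩ E) :=
        (measure_mono hcover).trans (measure_iUnion_le _)
    _ ≤ ∑' y, μ (pathEvent X n path) * ENNReal.ofReal (K (path n) y * u y) :=
        ENNReal.tsum_le_tsum fun y => (h y).trans_eq <| by
          rw [pathEvent_succ_update, hX, ENNReal.ofReal_mul (hK _ _), mul_assoc]
    _ = μ (pathEvent X n path) * ENNReal.ofReal (∑' y, K (path n) y * u y) := by
        rw [ENNReal.tsum_mul_left,
          ENNReal.ofReal_tsum_of_nonneg (fun y => mul_nonneg (hK _ _) (hu y)) hsum]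

lemma IsMarkovChain.measure_pathEvent_inter_forall_notMem_le (hX : IsMarkovChain μ X K)
    (hK : IsStochastic K) (A : Set S) (k n : ℕ) (path : ℕ → S) :
    μ (pathEvent X n path ∩ {ω | ∀ j ≥ n, X j ω ∉ A}) ≤
      μ (pathEvent X n path) * ENNReal.ofReal (avoidProb K A k (path n)) := by
  induction k generalizing n path with
  | zero => simpa [avoidProb] using measure_mono inter_subset_left
  | succ k ih =>
    by_cases hn : path n ∈ A
    · have hempty : pathEvent X n path ∩ {ω | ∀ j ≥ n, X j ω ∉ A} = ∅ :=
        eq_empty_of_forall_notMem fun ω hω => hω.2 n le_rfl ((hω.1 n le_rfl).symm ▸ hn)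
      simp [hempty]
    · rw [avoidProb_succ_of_notMem hn]
      have hmem := avoidProb_mem_Icc hK A k
      refine hX.measure_pathEvent_inter_le_tsum hK.nonneg (fun y => (hmem y).1)
        (hK.summable_mul _ hmem) fun y => ?_
      have hstep := ih (n + 1) (Function.update path (n + 1) y)
      rw [Function.update_self] at hstep
      exact (measure_mono <| inter_subset_inter_right _ fun ω (hω : ∀ j ≥ n, X j ω ∉ A) j hj =>
        hω j (n.le_succ.trans hj)).trans hstep

theorem IsMarkovChain.measure_forall_notMem_eq_zero [IsFiniteMeasure μ] (hX : IsMarkovChain μ X K)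
    (hK : IsStochastic K) {A : Set S}
    (hA : ∀ z, Tendsto (fun k => avoidProb K A k z) atTop (𝓝 0)) (N : ℕ) :
    μ {ω | ∀ j ≥ N, X j ω ∉ A} = 0 := by
  have hpath (path : ℕ → S) : μ (pathEvent X N path ∩ {ω | ∀ j ≥ N, X j ω ∉ A}) = 0 := by
    have hlim : Tendsto
        (fun k => μ (pathEvent X N path) * ENNReal.ofReal (avoidProb K A k (path N)))
        atTop (𝓝 0) := by
      simpa using ENNReal.Tendsto.const_mul (ENNReal.tendsto_ofReal (hA (path N)))
        (.inr (measure_ne_top μ (pathEvent X N path)))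
    exact nonpos_iff_eq_zero.1 <| ge_of_tendsto' hlim fun k =>
      hX.measure_pathEvent_inter_forall_notMem_le hK A k N path
  rw [← univ_inter {ω | ∀ j ≥ N, X j ω ∉ A}, ← iUnion_pathEvent_IicExtend X N, iUnion_inter]
  exact measure_iUnion_null fun p => hpath (IicExtend p)

theorem fosters_criterion_general [IsFiniteMeasure μ] (hX : IsMarkovChain μ X K)
    (hK : IsStochastic K) {A : Set S} (hA : ∀ z, Reaches K z A) {f : S → ℝ}
    (hsublevel : ∀ M : ℝ, {x | f x ≤ M}.Finite) {F : Set S} (hF : F.Finite)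
    (hdrift : ∀ x ∉ F, SuperharmonicAt K f x) :
    ∀ᵐ ω ∂μ, {n | X n ω ∈ A}.Infinite := by
  have hf : Tendsto f cofinite atTop := tendsto_atTop.2 fun M =>
    eventually_cofinite.2 <| (hsublevel M).subset fun x hx => (not_le.1 hx).le
  have hnull (N : ℕ) : μ {ω | ∀ j ≥ N, X j ω ∉ A} = 0 :=
    hX.measure_forall_notMem_eq_zero hK (tendsto_avoidProb_zero hK hA hf hF hdrift) N
  have hvisit : ∀ᵐ ω ∂μ, ∀ N, ∃ j ≥ N, X j ω ∈ A :=
    ae_all_iff.2 fun N => ae_iff.2 <| by simpa using hnull N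
  filter_upwards [hvisit] with ω hω
  exact Nat.frequently_atTop_iff_infinite.1 (frequently_atTop.2 hω)

end MarkovChain

/-- Foster's criterion: an irreducible Markov chain `(X_n)` on a countable state space
admitting a nonnegative Lyapunov function `f` with finite sublevel sets whose drift is
nonincreasing outside a finite set `F` is recurrent: almost surely every state is
visited infinitely often. -/
theorem fosters_criterion (S : Type*) [Countable S] [Nonempty S]
    (Ω : Type*) [MeasurableSpace Ω] (μ : Measure Ω) [IsProbabilityMeasure μ]
    (X : ℕ → Ω → S) (K : S → S → ℝ)
    (hKnonneg : ∀ x y, 0 ≤ K x y) (hKrow : ∀ x, ∑' y : S, K x y = 1)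
    -- time-homogeneous Markov property over cylinder events
    (hMarkov : ∀ (n : ℕ) (path : ℕ → S) (y : S),
      μ {ω | (∀ i ≤ n, X i ω = path i) ∧ X (n + 1) ω = y} =
        μ {ω | ∀ i ≤ n, X i ω = path i} * ENNReal.ofReal (K (path n) y))
    -- irreducibility
    (hirr : ∀ x y : S, ∃ n : ℕ, 0 < nStepProb K n x y)
    (f : S → ℝ) (hfnonneg : ∀ x, 0 ≤ f x)
    (hsublevel : ∀ M : ℝ, {x : S | f x ≤ M}.Finite)
    (F : Set S) (hF : F.Finite)
    (hsummable : ∀ x : S, Summable (fun y : S => K x y * f y))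
    (hdrift : ∀ x : S, x ∉ F → ∑' y : S, K x y * f y ≤ f x) :
    ∀ᵐ ω ∂μ, ∀ x : S, {n : ℕ | X n ω = x}.Infinite :=
  ae_all_iff.2 fun x => fosters_criterion_general (A := {x}) hMarkov ⟨hKnonneg, hKrow⟩
    (fun z => ⟨x, rfl, hirr z x⟩) hsublevel hF fun z hz => ⟨hsummable z, hdrift z hz⟩
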